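/- Combining the factorization of the BIMC posterior, the truncated-normal identification of q₁*, and the optimal parameter choice (y*, σ*²), the BIMC importance sampling density q_BIMC(x) = p(y*|x)p(x)/p(y*) is the Gaussian density on ℝᵐ closest in KL divergence to the ideal importance sampling density q*(x) = 1_Y(vᵀx + β) p(x)/μ, when p is the standard Gaussian on ℝᵐ and f is affine. -/

import Mathlib

open Real Matrix MeasureTheory

open ProbabilityTheory

noncomputable def GP (m : ℕ) : Measure (Fin m → ℝ) := Measure.pi (fun _ : Fin m => gaussianReal 0 1)

instance (m : ℕ) : IsProbabilityMeasure (GP m) := by unfold GP; infer_instance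

noncomputable def stdp (m : ℕ) (x : Fin m → ℝ) : ℝ :=
  (2 * π) ^ (-(m : ℝ) / 2) * exp (-(x ⬝ᵥ x) / 2)

lemma gpdf_eq (t : ℝ) : gaussianPDFReal 0 1 t = (2 * π) ^ (-(1 : ℝ) / 2) * exp (-t ^ 2 / 2) := by
  have h : (0:ℝ) ≤ 2 * π := by positivity
  simp only [gaussianPDFReal, NNReal.coe_one, mul_one, sub_zero, neg_div]
  rw [Real.sqrt_eq_rpow, ← Real.rpow_neg h]

lemma stdp_eq (m : ℕ) (x : Fin m → ℝ) : stdp m x = ∏ i, gaussianPDFReal 0 1 (x i) := by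
  have h : (0:ℝ) ≤ 2 * π := by positivity
  simp only [gpdf_eq, stdp]
  rw [Finset.prod_mul_distrib, ← Real.exp_sum, Finset.prod_const, Finset.card_univ, Fintype.card_fin,
    ← Real.rpow_mul_natCast h]
  congr 2
  · ring
  · simp only [dotProduct, ← Finset.sum_div, Finset.sum_neg_distrib, pow_two]

lemma stdp_pos (m : ℕ) (x : Fin m → ℝ) : 0 < stdp m x := by unfold stdp; positivity

lemma stdp_cont (m : ℕ) : Continuous (stdp m) := by
  unfold stdp; simp only [dotProduct]; fun_prop

lemma stdp_integrable (m : ℕ) : Integrable (stdp m) := by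
  have : stdp m = fun x => ∏ i, gaussianPDFReal 0 1 (x i) := funext (stdp_eq m)
  rw [this]
  exact Integrable.fintype_prod (fun _ => integrable_gaussianPDFReal 0 1)

lemma GP_eq (m : ℕ) : GP m = volume.withDensity (fun x => ENNReal.ofReal (stdp m x)) := by
  unfold GP
  refine Measure.pi_eq (fun s hs => ?_)
  rw [withDensity_apply _ (MeasurableSet.univ_pi hs), ← ofReal_integral_eq_lintegral_ofReal
    (stdp_integrable m).integrableOn (Filter.Eventually.of_forall fun x => (stdp_pos m x).le)]
  simp only [stdp_eq]
  rw [volume_pi, Measure.restrict_pi_pi, integral_fintype_prod_eq_prod (f := fun _ => gaussianPDFReal 0 1)]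
  rw [ENNReal.ofReal_prod_of_nonneg]
  · simp only [gaussianReal_apply_eq_integral 0 one_ne_zero]
  · intro i _
    exact integral_nonneg (fun x => gaussianPDFReal_nonneg _ _ _)

lemma GP_integral (m : ℕ) (F : (Fin m → ℝ) → ℝ) : ∫ x, F x ∂(GP m) = ∫ x, F x * stdp m x := by
  rw [GP_eq, integral_withDensity_eq_integral_toReal_smul (by have := stdp_cont m; fun_prop)
    (Filter.Eventually.of_forall fun x => ENNReal.ofReal_lt_top)]
  refine integral_congr_ae (Filter.Eventually.of_forall fun x => ?_)
  simp only [ENNReal.toReal_ofReal (stdp_pos m x).le, smul_eq_mul, mul_comm]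

lemma GP_integrable (m : ℕ) (F : (Fin m → ℝ) → ℝ) :
    Integrable F (GP m) ↔ Integrable (fun x => F x * stdp m x) := by
  rw [GP_eq, integrable_withDensity_iff_integrable_smul' (by have := stdp_cont m; fun_prop)
    (Filter.Eventually.of_forall fun x => ENNReal.ofReal_lt_top)]
  refine integrable_congr (Filter.Eventually.of_forall fun x => ?_)
  simp only [ENNReal.toReal_ofReal (stdp_pos m x).le, smul_eq_mul, mul_comm]

lemma stdp_integral (m : ℕ) : ∫ x, stdp m x = 1 := by
  have := GP_integral m (fun _ => 1)
  simpa using this.symm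

/-- normalization of a Gaussian density -/
lemma gauss_norm (m : ℕ) (c : Fin m → ℝ) (S : Matrix (Fin m) (Fin m) ℝ) (hS : S.PosDef) :
    Integrable (fun x : Fin m → ℝ => (2 * π) ^ (-(m : ℝ) / 2) * S.det ^ (-(1 : ℝ) / 2) *
        exp (-(1 / 2) * ((x - c) ⬝ᵥ S⁻¹ *ᵥ (x - c)))) ∧
    ∫ x : Fin m → ℝ, (2 * π) ^ (-(m : ℝ) / 2) * S.det ^ (-(1 : ℝ) / 2) *
        exp (-(1 / 2) * ((x - c) ⬝ᵥ S⁻¹ *ᵥ (x - c))) = 1 := by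
  open scoped MatrixOrder in
  obtain ⟨B, hB⟩ := CStarAlgebra.nonneg_iff_eq_star_mul_self.mp hS.inv.posSemidef.nonneg
  have hdS : 0 < S.det := hS.det_pos
  have hdB : B.det ^ 2 = S.det⁻¹ := by
    have := congrArg Matrix.det hB
    rw [det_nonsing_inv, Ring.inverse_eq_inv', det_mul, star_eq_conjTranspose, det_conjTranspose] at this
    rw [this]; simp [pow_two]
  have hB0 : B.det ≠ 0 := by
    intro h; rw [h] at hdB; have := inv_pos.mpr hdS; simp at hdB; linarith
  have habs : S.det ^ (-(1 : ℝ) / 2) = |B.det| := by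
    rw [← Real.sqrt_sq_eq_abs, hdB, Real.sqrt_eq_rpow, Real.inv_rpow hdS.le, ← Real.rpow_neg hdS.le]
    congr 1; ring
  have key : ∀ x : Fin m → ℝ, (2 * π) ^ (-(m : ℝ) / 2) * S.det ^ (-(1 : ℝ) / 2) *
        exp (-(1 / 2) * ((x - c) ⬝ᵥ S⁻¹ *ᵥ (x - c))) = |B.det| * (stdp m (toLin' B (x - c))) := by
    intro x
    rw [habs, stdp, hB, ← mulVec_mulVec, toLin'_apply, star_eq_conjTranspose, dotProduct_mulVec,
      vecMul_conjTranspose]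
    simp only [star_trivial]
    rw [mul_comm ((2 * π) ^ (-(m : ℝ) / 2)), mul_assoc]
    congr 3; ring
  simp only [key]
  have hmap := Real.map_matrix_volume_pi_eq_smul_volume_pi hB0
  have hmeas : Measurable (toLin' B) := (toLin' B).continuous_of_finiteDimensional.measurable
  have hi : Integrable (fun x => stdp m (toLin' B x)) := by
    have : Integrable (stdp m) (Measure.map (toLin' B) volume) := by
      rw [hmap]; exact (stdp_integrable m).smul_measure ENNReal.ofReal_ne_top
    exact this.comp_measurable hmeas
  have hv : ∫ x, stdp m (toLin' B x) = |B.det|⁻¹ := by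
    rw [← integral_map hmeas.aemeasurable (stdp_cont m).aestronglyMeasurable, hmap,
      integral_smul_measure, stdp_integral]
    simp [abs_inv]
  refine ⟨(hi.comp_sub_right c).const_mul _, ?_⟩
  rw [integral_const_mul, integral_sub_right_eq_self (fun x => stdp m (toLin' B x)) c, hv]
  exact mul_inv_cancel₀ (abs_ne_zero.mpr hB0)

/-- decomposition of the standard Gaussian along a unit vector -/
lemma GP_decomp (m : ℕ) (e : Fin m → ℝ) (he : e ⬝ᵥ e = 1) :
    Measure.map (fun z : ℝ × (Fin m → ℝ) => z.1 • e + (z.2 - (e ⬝ᵥ z.2) • e))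
      ((gaussianReal 0 1).prod (GP m)) = GP m := by
  let T : ℝ × (Fin m → ℝ) →ₗ[ℝ] (Fin m → ℝ) :=
    { toFun := fun z => z.1 • e + (z.2 - (e ⬝ᵥ z.2) • e)
      map_add' := by intro x y; simp only [Prod.fst_add, Prod.snd_add, dotProduct_add]; module
      map_smul' := by
        intro r y
        simp only [Prod.smul_fst, Prod.smul_snd, dotProduct_smul, smul_eq_mul, RingHom.id_apply]
        module }
  let T' : ℝ × (Fin m → ℝ) →L[ℝ] (Fin m → ℝ) := T.toContinuousLinearMap
  have hT : (fun z : ℝ × (Fin m → ℝ) => z.1 • e + (z.2 - (e ⬝ᵥ z.2) • e)) = T' := rfl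
  rw [hT]
  have : IsFiniteMeasure (Measure.map T' ((gaussianReal 0 1).prod (GP m))) := inferInstance
  refine Measure.ext_of_charFunDual (funext fun L => ?_)
  have h1 : ∀ L : StrongDual ℝ ℝ, charFunDual (gaussianReal 0 1) L = Complex.exp (-((L 1 : ℝ):ℂ) ^ 2 / 2) := by
    intro L
    rw [charFunDual_eq_charFun_map_one, gaussianReal_map_continuousLinearMap, charFun_gaussianReal]
    simp [neg_div, max_eq_left (sq_nonneg (L 1))]
  have h2 : ∀ L : StrongDual ℝ (Fin m → ℝ), charFunDual (GP m) L
      = Complex.exp (((-(∑ i, (L (Pi.single i 1)) ^ 2) / 2 : ℝ)) : ℂ) := by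
    intro L
    unfold GP
    rw [charFunDual_pi]
    simp only [h1]
    rw [← Complex.exp_sum]
    congr 1
    push_cast
    simp [Finset.sum_neg_distrib, neg_div, Finset.sum_div]
  rw [charFunDual_map, charFunDual_prod, h1, h2, h2, ← Complex.exp_add]
  congr 1
  norm_cast
  have hL : ∀ x : Fin m → ℝ, L x = ∑ i, x i * L (Pi.single i 1) := by
    intro x
    conv_lhs => rw [pi_eq_sum_univ' x]
    simp [map_sum]
  have a1 : ((L.comp T').comp (.inl ℝ ℝ (Fin m → ℝ))) 1 = L e := by
    simp [← hT]
  have a2 : ∀ i, ((L.comp T').comp (.inr ℝ ℝ (Fin m → ℝ))) (Pi.single i 1) = L (Pi.single i 1) - e i * L e := by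
    intro i
    simp [← hT]
  rw [a1]
  simp only [a2]
  have hs : ∑ i, (L (Pi.single i 1) - e i * L e) ^ 2 = ∑ i, (L (Pi.single i 1)) ^ 2 - (L e)^2 := by
    have : ∀ i, (L (Pi.single i 1) - e i * L e) ^ 2 = (L (Pi.single i 1)) ^ 2 
      - 2 * L e * (e i * L (Pi.single i 1)) + (L e)^2 * (e i * e i) := by intro i; ring
    simp only [this]
    rw [Finset.sum_add_distrib, Finset.sum_sub_distrib, ← Finset.mul_sum, ← Finset.mul_sum, ← hL e]
    have : ∑ i, e i * e i = 1 := he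
    rw [this]; ring
  rw [hs]; ring

lemma trunc_bounds (K a b : ℝ) (hK : 0 < K) (hab : a < b) (Z M1 M2 : ℝ)
    (hZ : Z = ∫ t in Set.Icc a b, K * exp (-t ^ 2 / 2))
    (hM1 : M1 = ∫ t in Set.Icc a b, t * (K * exp (-t ^ 2 / 2)))
    (hM2 : M2 = ∫ t in Set.Icc a b, t ^ 2 * (K * exp (-t ^ 2 / 2))) :
    0 < Z ∧ 0 < M2 / Z - (M1 / Z) ^ 2 ∧ M2 / Z - (M1 / Z) ^ 2 < 1 := by
  rw [integral_Icc_eq_integral_Ioc, ← intervalIntegral.integral_of_le hab.le] at hZ hM1 hM2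
  set p : ℝ → ℝ := fun t => K * exp (-t ^ 2 / 2) with hp
  have hpc : Continuous p := by rw [hp]; fun_prop
  have hpp : ∀ t, 0 < p t := fun t => by simp only [hp]; positivity
  have i0 : IntervalIntegrable p volume a b := hpc.intervalIntegrable _ _
  have i1 : IntervalIntegrable (fun t => t * p t) volume a b :=
    Continuous.intervalIntegrable (by fun_prop) _ _
  have i2 : IntervalIntegrable (fun t => t ^ 2 * p t) volume a b :=
    Continuous.intervalIntegrable (by fun_prop) _ _
  change Z = ∫ t in a..b, p t at hZ
  change M1 = ∫ t in a..b, t * p t at hM1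
  change M2 = ∫ t in a..b, t ^ 2 * p t at hM2
  have Zpos : 0 < Z := by
    rw [hZ]
    exact intervalIntegral.integral_pos hab hpc.continuousOn (fun t _ => (hpp t).le)
      ⟨a, Set.left_mem_Icc.mpr hab.le, hpp a⟩
  have ha : 0 < M1 - a * Z := by
    have : M1 - a * Z = ∫ t in a..b, (t - a) * p t := by
      rw [hM1, hZ, ← intervalIntegral.integral_const_mul, ← intervalIntegral.integral_sub i1 (i0.const_mul a)]
      congr 1; ext t; ring
    rw [this]
    exact intervalIntegral.integral_pos hab (by fun_prop)
      (fun t ht => mul_nonneg (by linarith [ht.1]) (hpp t).le)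
      ⟨b, Set.right_mem_Icc.mpr hab.le, mul_pos (by linarith) (hpp b)⟩
  have hb : 0 < b * Z - M1 := by
    have : b * Z - M1 = ∫ t in a..b, (b - t) * p t := by
      rw [hM1, hZ, ← intervalIntegral.integral_const_mul, ← intervalIntegral.integral_sub (i0.const_mul b) i1]
      congr 1; ext t; ring
    rw [this]
    exact intervalIntegral.integral_pos hab (by fun_prop)
      (fun t ht => mul_nonneg (by linarith [ht.2]) (hpp t).le)
      ⟨a, Set.left_mem_Icc.mpr hab.le, mul_pos (by linarith) (hpp a)⟩
  set φ := M1 / Z with hφ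
  have hM1' : M1 = φ * Z := by rw [hφ]; field_simp
  have hφa : a < φ := by rw [hφ, lt_div_iff₀ Zpos]; linarith
  have hφb : φ < b := by rw [hφ, div_lt_iff₀ Zpos]; linarith
  have hvar : 0 < M2 - φ ^ 2 * Z := by
    have : M2 - φ ^ 2 * Z = ∫ t in a..b, (t - φ) ^ 2 * p t := by
      have e1 : M2 - φ ^ 2 * Z = M2 - (2 * φ) * M1 + φ ^ 2 * Z := by rw [hM1']; ring
      rw [e1, hM2, hM1, hZ, ← intervalIntegral.integral_const_mul, ← intervalIntegral.integral_const_mul,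
        ← intervalIntegral.integral_sub i2 (i1.const_mul _),
        ← intervalIntegral.integral_add (i2.sub (i1.const_mul _)) (i0.const_mul _)]
      congr 1; ext t; ring
    rw [this]
    exact intervalIntegral.integral_pos hab (by fun_prop)
      (fun t ht => mul_nonneg (sq_nonneg _) (hpp t).le)
      ⟨a, Set.left_mem_Icc.mpr hab.le, mul_pos (by nlinarith) (hpp a)⟩
  have hlt : M2 - φ ^ 2 * Z < Z := by
    have hd : ∀ t ∈ Set.uIcc a b, HasDerivAt (fun t => (t - φ) * p t) (p t - (t ^ 2 * p t - φ * (t * p t))) t := by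
      intro t _
      have h1 : HasDerivAt p (-t * p t) t := by
        have : HasDerivAt (fun t : ℝ => -t ^ 2 / 2) (-t) t := by
          have h := ((hasDerivAt_pow 2 t).neg).div_const 2
          exact h.congr_deriv (by norm_num; ring)
        have h := (this.exp).const_mul K
        exact h.congr_deriv (by simp only [hp]; ring)
      have h := ((hasDerivAt_id t).sub_const φ).mul h1
      exact h.congr_deriv (by simp only [id]; ring)
    have := intervalIntegral.integral_eq_sub_of_hasDerivAt hd (i0.sub (i2.sub (i1.const_mul φ)))
    rw [intervalIntegral.integral_sub i0 (i2.sub (i1.const_mul φ)),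
      intervalIntegral.integral_sub i2 (i1.const_mul φ), intervalIntegral.integral_const_mul φ,
      ← hZ, ← hM1, ← hM2] at this
    have h1 := mul_pos (sub_pos.mpr hφa) (hpp a)
    have h2 := mul_pos (sub_pos.mpr hφb) (hpp b)
    rw [hM1'] at this
    nlinarith
  refine ⟨Zpos, ?_, ?_⟩
  · have : M2 / Z - φ ^ 2 = (M2 - φ ^ 2 * Z) / Z := by field_simp
    rw [this]; positivity
  · have : M2 / Z - φ ^ 2 = (M2 - φ ^ 2 * Z) / Z := by field_simp
    rw [this, div_lt_one Zpos]; exact hlt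

lemma affine_memLp (m : ℕ) (u : Fin m → ℝ) (k : ℝ) : MemLp (fun x => u ⬝ᵥ x + k) 2 (GP m) := by
  refine MemLp.add ?_ (memLp_const k)
  change MemLp (fun x => ∑ i, u i * x i) 2 (GP m)
  refine memLp_finsetSum _ (fun i _ => MemLp.const_mul ?_ _)
  have := (memLp_id_gaussianReal' (μ := 0) (v := 1) 2 (by simp)).comp_measurePreserving
    (measurePreserving_eval (fun _ : Fin m => gaussianReal 0 1) i)
  exact this

lemma mom (m : ℕ) (e : Fin m → ℝ) (he : e ⬝ᵥ e = 1) (h : ℝ → ℝ) (hm : Measurable h)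
    (h0 : Integrable h (gaussianReal 0 1)) (h1 : Integrable (fun t => t * h t) (gaussianReal 0 1))
    (h2 : Integrable (fun t => t ^ 2 * h t) (gaussianReal 0 1)) (u w : Fin m → ℝ) (k l : ℝ) :
    Integrable (fun x => h (e ⬝ᵥ x) * ((u ⬝ᵥ x + k) * (w ⬝ᵥ x + l))) (GP m) ∧
    ∫ x, h (e ⬝ᵥ x) * ((u ⬝ᵥ x + k) * (w ⬝ᵥ x + l)) ∂(GP m) =
      (∫ t, t ^ 2 * h t ∂(gaussianReal 0 1)) * ((u ⬝ᵥ e) * (w ⬝ᵥ e)) +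
      (∫ t, t * h t ∂(gaussianReal 0 1)) *
        (∫ x, ((u ⬝ᵥ e) * ((w - (w ⬝ᵥ e) • e) ⬝ᵥ x + l) + (w ⬝ᵥ e) * ((u - (u ⬝ᵥ e) • e) ⬝ᵥ x + k)) ∂(GP m)) +
      (∫ t, h t ∂(gaussianReal 0 1)) *
        (∫ x, ((u - (u ⬝ᵥ e) • e) ⬝ᵥ x + k) * ((w - (w ⬝ᵥ e) • e) ⬝ᵥ x + l) ∂(GP m)) := by
  set T : ℝ × (Fin m → ℝ) → (Fin m → ℝ) := fun z => z.1 • e + (z.2 - (e ⬝ᵥ z.2) • e) with hT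
  have hmapT : Measure.map T ((gaussianReal 0 1).prod (GP m)) = GP m := GP_decomp m e he
  have hTm : Measurable T := by rw [hT]; simp only [dotProduct]; fun_prop
  set F : (Fin m → ℝ) → ℝ := fun x => h (e ⬝ᵥ x) * ((u ⬝ᵥ x + k) * (w ⬝ᵥ x + l)) with hF
  have hFm : Measurable F := by
    rw [hF]; simp only [dotProduct]; fun_prop
  set u' := u - (u ⬝ᵥ e) • e
  set w' := w - (w ⬝ᵥ e) • e
  have hL : ∀ (u : Fin m → ℝ) (z : ℝ × (Fin m → ℝ)), u ⬝ᵥ T z = z.1 * (u ⬝ᵥ e) + (u - (u ⬝ᵥ e) • e) ⬝ᵥ z.2 := by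
    intro u z
    simp only [hT, dotProduct_add, dotProduct_sub, dotProduct_smul, sub_dotProduct, smul_dotProduct, smul_eq_mul]
    ring
  have heT : ∀ z, e ⬝ᵥ T z = z.1 := by intro z; rw [hL, he]; simp
  have hcomp : ∀ z : ℝ × (Fin m → ℝ), F (T z) =
      (z.1 ^ 2 * h z.1) * ((u ⬝ᵥ e) * (w ⬝ᵥ e)) +
      (z.1 * h z.1) * ((u ⬝ᵥ e) * (w' ⬝ᵥ z.2 + l) + (w ⬝ᵥ e) * (u' ⬝ᵥ z.2 + k)) +
      h z.1 * ((u' ⬝ᵥ z.2 + k) * (w' ⬝ᵥ z.2 + l)) := by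
    intro z
    simp only [hF, heT, hL u, hL w]
    ring
  have a1 : Integrable (fun x => ((u ⬝ᵥ e) * (w' ⬝ᵥ x + l) + (w ⬝ᵥ e) * (u' ⬝ᵥ x + k))) (GP m) :=
    (((affine_memLp m w' l).integrable (by norm_num)).const_mul _).add
      (((affine_memLp m u' k).integrable (by norm_num)).const_mul _)
  have a2 : Integrable (fun x => (u' ⬝ᵥ x + k) * (w' ⬝ᵥ x + l)) (GP m) :=
    (affine_memLp m u' k).integrable_mul (affine_memLp m w' l)
  have a0 : Integrable (fun _ : Fin m → ℝ => (u ⬝ᵥ e) * (w ⬝ᵥ e)) (GP m) := integrable_const _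
  have b0 := h2.mul_prod a0
  have b1 := h1.mul_prod a1
  have b2 := h0.mul_prod a2
  have hint : Integrable (fun z => F (T z)) ((gaussianReal 0 1).prod (GP m)) := by
    simp only [hcomp]
    exact (b0.add b1).add b2
  constructor
  · rw [← hmapT, integrable_map_measure hFm.aestronglyMeasurable hTm.aemeasurable]
    exact hint
  · rw [← hmapT, integral_map hTm.aemeasurable hFm.aestronglyMeasurable, hmapT]
    simp only [hcomp]
    have b01 : Integrable (fun z : ℝ × (Fin m → ℝ) => (z.1 ^ 2 * h z.1) * ((u ⬝ᵥ e) * (w ⬝ᵥ e)) +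
      (z.1 * h z.1) * ((u ⬝ᵥ e) * (w' ⬝ᵥ z.2 + l) + (w ⬝ᵥ e) * (u' ⬝ᵥ z.2 + k)))
      ((gaussianReal 0 1).prod (GP m)) := b0.add b1
    rw [integral_add b01 b2, integral_add b0 b1,
      integral_prod_mul (fun t => t ^ 2 * h t) (fun _ : Fin m → ℝ => (u ⬝ᵥ e) * (w ⬝ᵥ e)),
      integral_prod_mul (fun t => t * h t) (fun x => ((u ⬝ᵥ e) * (w' ⬝ᵥ x + l) + (w ⬝ᵥ e) * (u' ⬝ᵥ x + k))),
      integral_prod_mul h (fun x => (u' ⬝ᵥ x + k) * (w' ⬝ᵥ x + l))]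
    simp

/-- matching of integrals against two tilted Gaussian laws -/
def DD (m : ℕ) (e : Fin m → ℝ) (hs hB : ℝ → ℝ) (Q : (Fin m → ℝ) → ℝ) : Prop :=
  Integrable (fun x => hs (e ⬝ᵥ x) * Q x) (GP m) ∧ Integrable (fun x => hB (e ⬝ᵥ x) * Q x) (GP m) ∧
  ∫ x, hs (e ⬝ᵥ x) * Q x ∂(GP m) = ∫ x, hB (e ⬝ᵥ x) * Q x ∂(GP m)

lemma DD.add {m : ℕ} {e : Fin m → ℝ} {hs hB : ℝ → ℝ} {Q R : (Fin m → ℝ) → ℝ}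
    (hQ : DD m e hs hB Q) (hR : DD m e hs hB R) : DD m e hs hB (fun x => Q x + R x) := by
  unfold DD
  simp only [mul_add]
  refine ⟨hQ.1.add hR.1, hQ.2.1.add hR.2.1, ?_⟩
  rw [integral_add hQ.1 hR.1, integral_add hQ.2.1 hR.2.1, hQ.2.2, hR.2.2]

lemma DD.const_mul {m : ℕ} {e : Fin m → ℝ} {hs hB : ℝ → ℝ} {Q : (Fin m → ℝ) → ℝ}
    (hQ : DD m e hs hB Q) (c : ℝ) : DD m e hs hB (fun x => c * Q x) := by
  unfold DD
  simp only [mul_left_comm _ c]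
  refine ⟨hQ.1.const_mul c, hQ.2.1.const_mul c, ?_⟩
  rw [integral_const_mul, integral_const_mul, hQ.2.2]

lemma DD.sum {m : ℕ} {e : Fin m → ℝ} {hs hB : ℝ → ℝ} {ι : Type*} (s : Finset ι)
    {Q : ι → (Fin m → ℝ) → ℝ}
    (hQ : ∀ i, DD m e hs hB (Q i)) : DD m e hs hB (fun x => ∑ i ∈ s, Q i x) := by
  classical
  induction s using Finset.induction_on with
  | empty => unfold DD; simp
  | insert a s ha ih => simp only [Finset.sum_insert ha]; exact (hQ a).add ih


lemma N_integrable (φ : ℝ) (w : NNReal) (hw : w ≠ 0) (F : ℝ → ℝ) :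
    Integrable F (gaussianReal φ w) ↔ Integrable (fun t => F t * gaussianPDFReal φ w t) := by
  rw [gaussianReal_of_var_ne_zero _ hw, integrable_withDensity_iff_integrable_smul'
    (measurable_gaussianPDF _ _) (Filter.Eventually.of_forall fun x => gaussianPDF_lt_top)]
  refine integrable_congr (Filter.Eventually.of_forall fun x => ?_)
  simp only [toReal_gaussianPDF, smul_eq_mul, mul_comm]

lemma N_integral (φ : ℝ) (w : NNReal) (hw : w ≠ 0) (F : ℝ → ℝ) :
    ∫ t, F t ∂(gaussianReal φ w) = ∫ t, F t * gaussianPDFReal φ w t := by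
  rw [integral_gaussianReal_eq_integral_smul hw]
  refine integral_congr_ae (Filter.Eventually.of_forall fun x => ?_)
  simp only [smul_eq_mul, mul_comm]

lemma tilt (φ : ℝ) (w : NNReal) (hw : w ≠ 0) (C : ℝ) (h : ℝ → ℝ)
    (hh : ∀ t, h t * gaussianPDFReal 0 1 t = C * gaussianPDFReal φ w t) (F : ℝ → ℝ)
    (hF : Integrable F (gaussianReal φ w)) :
    Integrable (fun t => F t * h t) (gaussianReal 0 1) ∧
    ∫ t, F t * h t ∂(gaussianReal 0 1) = C * ∫ t, F t ∂(gaussianReal φ w) := by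
  have e1 : (fun t => F t * h t * gaussianPDFReal 0 1 t) = fun t => C * (F t * gaussianPDFReal φ w t) := by
    ext t; rw [mul_assoc, hh]; ring
  rw [N_integrable 0 1 one_ne_zero, N_integral 0 1 one_ne_zero, N_integral φ w hw, e1, integral_const_mul]
  exact ⟨((N_integrable φ w hw F).mp hF).const_mul C, rfl⟩

lemma second_moment (φ : ℝ) (w : NNReal) :
    Integrable (fun t => t ^ 2) (gaussianReal φ w) ∧ ∫ t, t ^ 2 ∂(gaussianReal φ w) = w + φ ^ 2 := by
  have hL : MemLp id 2 (gaussianReal φ w) := memLp_id_gaussianReal' 2 (by simp)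
  refine ⟨hL.integrable_sq, ?_⟩
  have h1 := variance_eq_sub hL
  rw [variance_id_gaussianReal] at h1
  simp only [id, Pi.pow_apply, integral_id_gaussianReal] at h1
  linarith

lemma core (m : ℕ) (e : Fin m → ℝ) (hs hB : ℝ → ℝ) (A : Set ℝ) (c0 k α s : ℝ)
    (hc0 : 0 < c0) (hsd : ∀ t, hs t = A.indicator (fun _ => c0) t)
    (hBd : ∀ t, hB t = exp (k - s * (α - t) ^ 2))
    (hD : ∀ (u w : Fin m → ℝ) (k l : ℝ), DD m e hs hB (fun x => (u ⬝ᵥ x + k) * (w ⬝ᵥ x + l)))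
    (hB1 : ∫ x, hB (e ⬝ᵥ x) ∂(GP m) = 1)
    (c : Fin m → ℝ) (S : Matrix (Fin m) (Fin m) ℝ) (hS : S.PosDef) (g : (Fin m → ℝ) → ℝ)
    (hg : ∀ x, g x = (2 * π) ^ (-(m : ℝ) / 2) * S.det ^ (-(1 : ℝ) / 2) *
        exp (-(1 / 2) * ((x - c) ⬝ᵥ S⁻¹ *ᵥ (x - c)))) :
    (∫ x, (hs (e ⬝ᵥ x) * stdp m x) * Real.log ((hs (e ⬝ᵥ x) * stdp m x) / (hB (e ⬝ᵥ x) * stdp m x))) ≤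
    ∫ x, (hs (e ⬝ᵥ x) * stdp m x) * Real.log ((hs (e ⬝ᵥ x) * stdp m x) / g x) := by
  have hdS : 0 < S.det := hS.det_pos
  have hgpos : ∀ x, 0 < g x := fun x => by rw [hg]; positivity
  have hBpos : ∀ t, 0 < hB t := fun t => by rw [hBd]; positivity
  obtain ⟨hgi, hg1⟩ := gauss_norm m c S hS
  have hgi' : Integrable g := by rw [funext hg]; exact hgi
  have hg1' : ∫ x, g x = 1 := by rw [funext hg]; exact hg1
  have hconst : ∀ r : ℝ, DD m e hs hB (fun _ => r) := fun r => by
    simpa using hD 0 0 r 1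
  -- log of hB is quadratic
  have hlogB : DD m e hs hB (fun x => Real.log (hB (e ⬝ᵥ x))) := by
    have h1 := (hconst k).add ((hD (-e) (-e) α α).const_mul (-s))
    have e1 : (fun x => Real.log (hB (e ⬝ᵥ x))) =
        fun x => k + -s * ((-e ⬝ᵥ x + α) * (-e ⬝ᵥ x + α)) := by
      ext x
      rw [hBd, Real.log_exp, neg_dotProduct]; ring
    rw [e1]; exact h1
  have hQ0 : DD m e hs hB (fun x => Real.log c0 + -1 * Real.log (hB (e ⬝ᵥ x))) :=
    (hconst _).add (hlogB.const_mul _)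
  have hlogp : DD m e hs hB (fun x => Real.log (stdp m x)) := by
    have h1 := (hconst (Real.log ((2 * π) ^ (-(m : ℝ) / 2)))).add
      ((DD.sum Finset.univ (fun i => hD (Pi.single i 1) (Pi.single i 1) 0 0)).const_mul (-1 / 2))
    have e1 : (fun x => Real.log (stdp m x)) = fun x => Real.log ((2 * π) ^ (-(m : ℝ) / 2)) +
        -1 / 2 * ∑ i, ((Pi.single i 1 ⬝ᵥ x + 0) * (Pi.single i 1 ⬝ᵥ x + 0)) := by
      ext x
      rw [stdp, Real.log_mul (by positivity) (by positivity), Real.log_exp]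
      simp only [single_dotProduct, add_zero, one_mul]
      rw [dotProduct]
      ring
    rw [e1]; exact h1
  have hlogg : DD m e hs hB (fun x => Real.log (g x)) := by
    have h1 := (hconst (Real.log ((2 * π) ^ (-(m : ℝ) / 2) * S.det ^ (-(1 : ℝ) / 2)))).add
      ((DD.sum Finset.univ (fun i => hD (Pi.single i 1) (S⁻¹ i) (-c i) (-(S⁻¹ i ⬝ᵥ c)))).const_mul (-1 / 2))
    have e1 : (fun x => Real.log (g x)) = fun x =>
        Real.log ((2 * π) ^ (-(m : ℝ) / 2) * S.det ^ (-(1 : ℝ) / 2)) +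
        -1 / 2 * ∑ i, ((Pi.single i 1 ⬝ᵥ x + -c i) * (S⁻¹ i ⬝ᵥ x + -(S⁻¹ i ⬝ᵥ c))) := by
      ext x
      rw [hg, Real.log_mul (by positivity) (by positivity), Real.log_exp]
      have : (x - c) ⬝ᵥ S⁻¹ *ᵥ (x - c) =
          ∑ i, ((Pi.single i 1 ⬝ᵥ x + -c i) * (S⁻¹ i ⬝ᵥ x + -(S⁻¹ i ⬝ᵥ c))) := by
        rw [dotProduct]
        refine Finset.sum_congr rfl (fun i _ => ?_)
        rw [single_dotProduct, mulVec, dotProduct_sub, Pi.sub_apply]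
        ring
      rw [this]; ring
    rw [e1]; exact h1
  have hQ : DD m e hs hB (fun x => Real.log (hB (e ⬝ᵥ x)) + Real.log (stdp m x) + -1 * Real.log (g x)) :=
    (hlogB.add hlogp).add (hlogg.const_mul _)
  have k1 : ∀ x, (hs (e ⬝ᵥ x) * stdp m x) * Real.log ((hs (e ⬝ᵥ x) * stdp m x) / (hB (e ⬝ᵥ x) * stdp m x))
      = (hs (e ⬝ᵥ x) * (Real.log c0 + -1 * Real.log (hB (e ⬝ᵥ x)))) * stdp m x := by
    intro x
    by_cases hx : e ⬝ᵥ x ∈ A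
    · have : hs (e ⬝ᵥ x) = c0 := by rw [hsd, Set.indicator_of_mem hx]
      rw [this, mul_div_mul_right _ _ (stdp_pos m x).ne', Real.log_div hc0.ne' (hBpos _).ne']
      ring
    · have : hs (e ⬝ᵥ x) = 0 := by rw [hsd, Set.indicator_of_notMem hx]
      rw [this]; simp
  have k2 : ∀ x, (hs (e ⬝ᵥ x) * stdp m x) * Real.log ((hs (e ⬝ᵥ x) * stdp m x) / g x)
      = (hs (e ⬝ᵥ x) * (Real.log c0 + -1 * Real.log (hB (e ⬝ᵥ x))) + hs (e ⬝ᵥ x) *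
        (Real.log (hB (e ⬝ᵥ x)) + Real.log (stdp m x) + -1 * Real.log (g x))) * stdp m x := by
    intro x
    by_cases hx : e ⬝ᵥ x ∈ A
    · have : hs (e ⬝ᵥ x) = c0 := by rw [hsd, Set.indicator_of_mem hx]
      have hp := stdp_pos m x
      rw [this, Real.log_div (by positivity) (hgpos x).ne', Real.log_mul hc0.ne' hp.ne']
      ring
    · have : hs (e ⬝ᵥ x) = 0 := by rw [hsd, Set.indicator_of_notMem hx]
      rw [this]; simp
  simp only [k1, k2]
  rw [← GP_integral, ← GP_integral, integral_add hQ0.1 hQ.1, hQ.2.2]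
  suffices h : 0 ≤ ∫ x, hB (e ⬝ᵥ x) *
      (Real.log (hB (e ⬝ᵥ x)) + Real.log (stdp m x) + -1 * Real.log (g x)) ∂(GP m) by linarith
  rw [GP_integral]
  have hi := (GP_integrable m _).mp hQ.2.1
  have hBi : Integrable (fun x => hB (e ⬝ᵥ x) * stdp m x) := by
    have := (GP_integrable m _).mp (hconst 1).2.1
    simpa using this
  have hB1' : ∫ x, hB (e ⬝ᵥ x) * stdp m x = 1 := by rw [← GP_integral]; exact hB1
  have hle : ∫ x, (hB (e ⬝ᵥ x) * stdp m x - g x) ≤ ∫ x, hB (e ⬝ᵥ x) *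
      (Real.log (hB (e ⬝ᵥ x)) + Real.log (stdp m x) + -1 * Real.log (g x)) * stdp m x := by
    refine integral_mono (hBi.sub hgi') hi (fun x => ?_)
    have hp := stdp_pos m x
    have hb := hBpos (e ⬝ᵥ x)
    have hgx := hgpos x
    have hq : 0 < hB (e ⬝ᵥ x) * stdp m x := mul_pos hb hp
    have h1 := Real.log_le_sub_one_of_pos (div_pos hgx hq)
    rw [Real.log_div hgx.ne' hq.ne', Real.log_mul hb.ne' hp.ne'] at h1
    have h2 := mul_le_mul_of_nonneg_left h1 hq.le
    have h3 : hB (e ⬝ᵥ x) * stdp m x * (g x / (hB (e ⬝ᵥ x) * stdp m x) - 1) =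
      g x - hB (e ⬝ᵥ x) * stdp m x := by field_simp
    rw [h3] at h2
    simp only
    linarith
  rw [integral_sub hBi hgi', hB1', hg1'] at hle
  linarith


lemma int_tilted (m : ℕ) (e : Fin m → ℝ) (he : e ⬝ᵥ e = 1) (h : ℝ → ℝ) (hm : Measurable h)
    (h0 : Integrable h (gaussianReal 0 1)) (h1 : Integrable (fun t => t * h t) (gaussianReal 0 1))
    (h2 : Integrable (fun t => t ^ 2 * h t) (gaussianReal 0 1)) :
    ∫ x, h (e ⬝ᵥ x) ∂(GP m) = ∫ t, h t ∂(gaussianReal 0 1) := by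
  have := (mom m e he h hm h0 h1 h2 0 0 1 1).2
  simpa using this

lemma trunc_moment (a b c0 : ℝ) (F : ℝ → ℝ) (hF : Continuous F) :
    Integrable (fun t => F t * (Set.Icc a b).indicator (fun _ => c0) t) (gaussianReal 0 1) ∧
    ∫ t, F t * (Set.Icc a b).indicator (fun _ => c0) t ∂(gaussianReal 0 1) =
      c0 * ∫ t in Set.Icc a b, F t * ((2 * π) ^ (-(1 : ℝ) / 2) * exp (-t ^ 2 / 2)) := by
  have e1 : (fun t => F t * (Set.Icc a b).indicator (fun _ => c0) t * gaussianPDFReal 0 1 t) =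
      (Set.Icc a b).indicator
        (fun t => c0 * (F t * ((2 * π) ^ (-(1 : ℝ) / 2) * exp (-t ^ 2 / 2)))) := by
    ext t
    rw [gpdf_eq]
    by_cases ht : t ∈ Set.Icc a b
    · simp only [Set.indicator_of_mem ht]; ring
    · simp only [Set.indicator_of_notMem ht]; ring
  rw [N_integrable 0 1 one_ne_zero, N_integral 0 1 one_ne_zero, e1, integral_indicator measurableSet_Icc,
    integral_const_mul, integrable_indicator_iff measurableSet_Icc]
  refine ⟨?_, rfl⟩
  exact (Continuous.continuousOn (by fun_prop)).integrableOn_compact isCompact_Icc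

/-- BIMC optimality in the affine-Gaussian case: with standard Gaussian prior `p`
on `ℝᵐ`, affine map `f(x) = vᵀx + β`, target interval `Y = [y_min, y_max]`, and
optimal parameters `y* = ‖v‖φ_T/(1-ω_T²) + β`, `σ*² = ‖v‖²ω_T²/(1-ω_T²)` (where
`φ_T`, `ω_T²` are the mean and variance of the standard normal truncated to
`[(y_min-β)/‖v‖, (y_max-β)/‖v‖]`), the BIMC posterior density
`q_BIMC(x) = p(y*|x)p(x)/p(y*)` minimizes `D_KL(q* ‖ ·)` over all Gaussian
densities on `ℝᵐ`, where `q*(x) = 1_Y(vᵀx+β)p(x)/μ` is the ideal importance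
sampling density. -/
theorem bimc_optimality (m : ℕ) (v : Fin m → ℝ) (hv : v ≠ 0) (β ymin ymax : ℝ)
    (hY : ymin < ymax) :
    -- standard Gaussian prior density on ℝᵐ
    let p : (Fin m → ℝ) → ℝ := fun x => (2 * π) ^ (-(m : ℝ) / 2) * exp (-(x ⬝ᵥ x) / 2)
    let nv : ℝ := Real.sqrt (v ⬝ᵥ v)
    -- one-dimensional standard normal density
    let p₁ : ℝ → ℝ := fun t => (2 * π) ^ (-(1 : ℝ) / 2) * exp (-t ^ 2 / 2)
    -- truncation interval for x₁ and truncated moments φ_T, ω_T²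
    let a : ℝ := (ymin - β) / nv
    let b : ℝ := (ymax - β) / nv
    let Z : ℝ := ∫ t in Set.Icc a b, p₁ t
    let φT : ℝ := (∫ t in Set.Icc a b, t * p₁ t) / Z
    let ωT2 : ℝ := (∫ t in Set.Icc a b, t ^ 2 * p₁ t) / Z - φT ^ 2
    -- optimal pseudo-data and likelihood variance
    let ystar : ℝ := nv * φT / (1 - ωT2) + β
    let σstar2 : ℝ := nv ^ 2 * ωT2 / (1 - ωT2)
    -- likelihood, evidence and BIMC posterior density
    let lik : (Fin m → ℝ) → ℝ := fun x =>
      (Real.sqrt (2 * π * σstar2))⁻¹ * exp (-(ystar - (v ⬝ᵥ x + β)) ^ 2 / (2 * σstar2))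
    let py : ℝ := ∫ x : Fin m → ℝ, lik x * p x
    let qBIMC : (Fin m → ℝ) → ℝ := fun x => lik x * p x / py
    -- ideal importance sampling density
    let μ : ℝ := ∫ x : Fin m → ℝ,
      Set.indicator (Set.Icc ymin ymax) (fun _ => (1 : ℝ)) (v ⬝ᵥ x + β) * p x
    let qstar : (Fin m → ℝ) → ℝ := fun x =>
      Set.indicator (Set.Icc ymin ymax) (fun _ => (1 : ℝ)) (v ⬝ᵥ x + β) * p x / μ
    -- KL divergence from qstar to a candidate density
    let KL : ((Fin m → ℝ) → ℝ) → ℝ := fun g => ∫ x : Fin m → ℝ,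
      qstar x * Real.log (qstar x / g x)
    -- q_BIMC is the Gaussian density on ℝᵐ closest in KL divergence to qstar
    ∀ (c : Fin m → ℝ) (S : Matrix (Fin m) (Fin m) ℝ), S.PosDef →
      KL qBIMC ≤ KL (fun x => (2 * π) ^ (-(m : ℝ) / 2) * S.det ^ (-(1 : ℝ) / 2) *
        exp (-(1 / 2) * ((x - c) ⬝ᵥ S⁻¹ *ᵥ (x - c)))) := by
  intro p nv p₁ a b Z φT ωT2 ystar σstar2 lik py qBIMC μ qstar KL c S hS
  have hvv : 0 < v ⬝ᵥ v := by
    have := (dotProduct_star_self_pos_iff (v := v)).mpr hv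
    simpa using this
  have hnv : 0 < nv := Real.sqrt_pos.mpr hvv
  have hnv2 : nv ^ 2 = v ⬝ᵥ v := Real.sq_sqrt hvv.le
  obtain ⟨e, hedef⟩ : ∃ e : Fin m → ℝ, e = nv⁻¹ • v := ⟨_, rfl⟩
  have he : e ⬝ᵥ e = 1 := by
    rw [hedef, smul_dotProduct, dotProduct_smul, ← hnv2]; simp only [smul_eq_mul]; field_simp
  have hve : ∀ x, v ⬝ᵥ x = nv * (e ⬝ᵥ x) := by
    intro x; rw [hedef, smul_dotProduct, smul_eq_mul]; field_simp
  have hab : a < b := div_lt_div_of_pos_right (by linarith) hnv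
  obtain ⟨hZ, hω0, hω1⟩ := trunc_bounds ((2 * π) ^ (-(1 : ℝ) / 2)) a b (by positivity) hab Z
    (∫ t in Set.Icc a b, t * p₁ t) (∫ t in Set.Icc a b, t ^ 2 * p₁ t) rfl rfl rfl
  change 0 < ωT2 at hω0
  change ωT2 < 1 at hω1
  have h1ω : 0 < 1 - ωT2 := by linarith
  have hσ : 0 < σstar2 := by
    change 0 < nv ^ 2 * ωT2 / (1 - ωT2)
    positivity
  have hyd : ystar = nv * φT / (1 - ωT2) + β := rfl
  have hσd : σstar2 = nv ^ 2 * ωT2 / (1 - ωT2) := rfl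
  -- the likelihood as a function of the coordinate along `e`
  obtain ⟨l, hl⟩ : ∃ l : ℝ → ℝ, ∀ t, l t = (Real.sqrt (2 * π * σstar2))⁻¹ *
    exp (-(ystar - (nv * t + β)) ^ 2 / (2 * σstar2)) := ⟨_, fun _ => rfl⟩
  have hlik : ∀ x, lik x = l (e ⬝ᵥ x) := by
    intro x
    change (Real.sqrt (2 * π * σstar2))⁻¹ * exp (-(ystar - (v ⬝ᵥ x + β)) ^ 2 / (2 * σstar2)) = _
    rw [hl, hve]
  have hlm : Measurable l := by rw [funext hl]; fun_prop
  obtain ⟨w, hw⟩ : ∃ w : NNReal, (w : ℝ) = ωT2 := ⟨⟨ωT2, hω0.le⟩, rfl⟩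
  have hw0 : w ≠ 0 := by
    intro h; rw [h] at hw; simp at hw; linarith
  obtain ⟨C, hC, hlC⟩ : ∃ C : ℝ, 0 < C ∧
      ∀ t, l t * gaussianPDFReal 0 1 t = C * gaussianPDFReal φT w t := by
    refine ⟨(Real.sqrt (2 * π * σstar2))⁻¹ * (2 * π) ^ (-(1 : ℝ) / 2) * Real.sqrt (2 * π * ωT2) *
      exp (-φT ^ 2 / (2 * (1 - ωT2))), by positivity, fun t => ?_⟩
    rw [hl, gpdf_eq, gaussianPDFReal, hw]
    have hsq : Real.sqrt (2 * π * ωT2) ≠ 0 := by positivity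
    have hexp : exp (-(ystar - (nv * t + β)) ^ 2 / (2 * σstar2)) * exp (-t ^ 2 / 2) =
        exp (-φT ^ 2 / (2 * (1 - ωT2))) * exp (-(t - φT) ^ 2 / (2 * ωT2)) := by
      rw [← Real.exp_add, ← Real.exp_add]
      congr 1
      rw [hyd, hσd]
      have := h1ω.ne'
      have := hω0.ne'
      have := hnv.ne'
      clear_value nv φT ωT2
      field_simp
      ring
    generalize (Real.sqrt (2 * π * σstar2))⁻¹ = A at *
    generalize ((2 * π) ^ (-(1 : ℝ) / 2) : ℝ) = B at *
    calc _ = A * B * (exp (-(ystar - (nv * t + β)) ^ 2 / (2 * σstar2)) * exp (-t ^ 2 / 2)) := by ring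
      _ = _ := by rw [hexp]; field_simp
  -- evidence
  have hmemid : MemLp id 2 (gaussianReal φT w) := memLp_id_gaussianReal' 2 (by simp)
  have hid : Integrable (fun t : ℝ => t) (gaussianReal φT w) := hmemid.integrable (by norm_num)
  have hpy : py = C := by
    have i0 := tilt φT w hw0 C l hlC (fun _ => 1) (integrable_const _)
    have i1 := tilt φT w hw0 C l hlC (fun t => t) hid
    have i2 := tilt φT w hw0 C l hlC (fun t => t ^ 2) (second_moment φT w).1
    simp only [one_mul] at i0
    have h1 : py = ∫ x, l (e ⬝ᵥ x) ∂(GP m) := by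
      rw [GP_integral]
      change ∫ x, lik x * stdp m x = _
      simp only [hlik]
    rw [h1, int_tilted m e he l hlm i0.1 i1.1 i2.1, i0.2]
    simp
  have hind : ∀ x, Set.indicator (Set.Icc ymin ymax) (fun _ => (1 : ℝ)) (v ⬝ᵥ x + β) =
      Set.indicator (Set.Icc a b) (fun _ => (1 : ℝ)) (e ⬝ᵥ x) := by
    intro x
    have : v ⬝ᵥ x + β ∈ Set.Icc ymin ymax ↔ e ⬝ᵥ x ∈ Set.Icc a b := by
      rw [hve, Set.mem_Icc, Set.mem_Icc]
      change _ ↔ (ymin - β) / nv ≤ _ ∧ _ ≤ (ymax - β) / nv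
      rw [div_le_iff₀ hnv, le_div_iff₀ hnv]
      constructor <;> rintro ⟨h1, h2⟩ <;> constructor <;> linarith
    by_cases hx : e ⬝ᵥ x ∈ Set.Icc a b
    · rw [Set.indicator_of_mem hx, Set.indicator_of_mem (this.mpr hx)]
    · rw [Set.indicator_of_notMem hx, Set.indicator_of_notMem (fun h => hx (this.mp h))]
  have him : ∀ r : ℝ, Measurable ((Set.Icc a b).indicator (fun _ => r)) := fun r =>
    measurable_const.indicator measurableSet_Icc
  have hμ : μ = Z := by
    have i0 := trunc_moment a b 1 (fun _ => 1) (by fun_prop)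
    have i1 := trunc_moment a b 1 (fun t => t) (by fun_prop)
    have i2 := trunc_moment a b 1 (fun t => t ^ 2) (by fun_prop)
    simp only [one_mul] at i0
    have h1 : μ = ∫ x, (Set.Icc a b).indicator (fun _ => (1 : ℝ)) (e ⬝ᵥ x) ∂(GP m) := by
      rw [GP_integral]
      change ∫ x, Set.indicator (Set.Icc ymin ymax) (fun _ => (1 : ℝ)) (v ⬝ᵥ x + β) * stdp m x = _
      simp only [hind]
    rw [h1, int_tilted m e he _ (him 1) i0.1 i1.1 i2.1, i0.2]
  obtain ⟨hs, hsd⟩ : ∃ hs : ℝ → ℝ, ∀ t, hs t = (Set.Icc a b).indicator (fun _ => Z⁻¹) t :=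
    ⟨_, fun _ => rfl⟩
  obtain ⟨hB, hBd⟩ : ∃ hB : ℝ → ℝ, ∀ t, hB t = l t / C := ⟨_, fun _ => rfl⟩
  have hBm : Measurable hB := by rw [funext hBd]; fun_prop
  have hBC : ∀ t, hB t * gaussianPDFReal 0 1 t = 1 * gaussianPDFReal φT w t := by
    intro t; rw [hBd, div_mul_eq_mul_div, hlC]; field_simp
  have j0 := tilt φT w hw0 1 hB hBC (fun _ => 1) (integrable_const _)
  have j1 := tilt φT w hw0 1 hB hBC (fun t => t) hid
  have j2 := tilt φT w hw0 1 hB hBC (fun t => t ^ 2) (second_moment φT w).1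
  rw [(second_moment φT w).2, hw] at j2
  rw [integral_id_gaussianReal] at j1
  have i0 := trunc_moment a b Z⁻¹ (fun _ => 1) (by fun_prop)
  have i1 := trunc_moment a b Z⁻¹ (fun t => t) (by fun_prop)
  have i2 := trunc_moment a b Z⁻¹ (fun t => t ^ 2) (by fun_prop)
  simp only [one_mul] at i0 j0 j1 j2
  simp only [← hsd] at i0 i1 i2
  have i0' : ∫ t, hs t ∂(gaussianReal 0 1) = 1 := by
    rw [i0.2]; exact inv_mul_cancel₀ hZ.ne'
  have j0' : ∫ t, hB t ∂(gaussianReal 0 1) = 1 := by rw [j0.2]; simp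
  have i1' : ∫ t, t * hs t ∂(gaussianReal 0 1) = φT := by
    rw [i1.2]; exact inv_mul_eq_div _ _
  have i2' : ∫ t, t ^ 2 * hs t ∂(gaussianReal 0 1) = ωT2 + φT ^ 2 := by
    rw [i2.2, inv_mul_eq_div]
    change _ = (∫ t in Set.Icc a b, t ^ 2 * p₁ t) / Z - φT ^ 2 + φT ^ 2
    rw [sub_add_cancel]
  have hsm : Measurable hs := by rw [funext hsd]; exact him _
  have hD : ∀ (u w : Fin m → ℝ) (k l : ℝ),
      DD m e hs hB (fun x => (u ⬝ᵥ x + k) * (w ⬝ᵥ x + l)) := by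
    intro u w k l
    have m1 := mom m e he hs hsm i0.1 i1.1 i2.1 u w k l
    have m2 := mom m e he hB hBm j0.1 j1.1 j2.1 u w k l
    refine ⟨m1.1, m2.1, ?_⟩
    rw [m1.2, m2.2, i0', i1', i2', j0', j1.2, j2.2]
  have hB1 : ∫ x, hB (e ⬝ᵥ x) ∂(GP m) = 1 := by
    rw [int_tilted m e he hB hBm j0.1 j1.1 j2.1, j0']
  have hBe : ∀ t, hB t = exp (Real.log ((Real.sqrt (2 * π * σstar2))⁻¹ / C) -
      (nv ^ 2 / (2 * σstar2)) * ((ystar - β) / nv - t) ^ 2) := by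
    intro t
    rw [Real.exp_sub, Real.exp_log (by positivity), hBd, hl]
    have : -(ystar - (nv * t + β)) ^ 2 / (2 * σstar2) =
        -((nv ^ 2 / (2 * σstar2)) * ((ystar - β) / nv - t) ^ 2) := by
      have := hnv.ne'
      have := hσ.ne'
      clear_value nv σstar2 ystar
      field_simp
      ring
    rw [this, Real.exp_neg]
    ring
  have hfin := core m e hs hB (Set.Icc a b) Z⁻¹ _ _ _ (inv_pos.mpr hZ) hsd hBe hD hB1 c S hS _
    (fun x => rfl)
  have hqs : ∀ x, qstar x = hs (e ⬝ᵥ x) * stdp m x := by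
    intro x
    change Set.indicator (Set.Icc ymin ymax) (fun _ => (1 : ℝ)) (v ⬝ᵥ x + β) * stdp m x / μ = _
    rw [hind, hμ, hsd]
    by_cases hx : e ⬝ᵥ x ∈ Set.Icc a b
    · rw [Set.indicator_of_mem hx, Set.indicator_of_mem hx]; ring
    · rw [Set.indicator_of_notMem hx, Set.indicator_of_notMem hx]; ring
  have hqB : ∀ x, qBIMC x = hB (e ⬝ᵥ x) * stdp m x := by
    intro x
    change lik x * stdp m x / py = _
    rw [hlik, hpy, hBd]; ring
  change (∫ x, qstar x * Real.log (qstar x / qBIMC x)) ≤ ∫ x, qstar x * Real.log (qstar x / _)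
  simp only [hqs, hqB]
  exact hfin
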